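/- arXiv:1802.01219 — 6 statements merged into one kernel-verified Lean document; each statement's English description precedes it below -/
import Mathlib

section
/- Let N ∈ ℕ, let ε > 0 and δ > 0 be real numbers, and let S : ℕ → ℝ satisfy Σ_{i=1}^{N} (S_i − S_{i−1})² ≤ ε. Let τ be the least n ≤ N such that |S_n − S_0| ≥ δ, and τ := N if no such n exists. Define the capital process I_n := 1 + (1/ε)·Σ_{i=1}^{min(n,τ)} 2·(S_{i−1} − S_0)·(S_i − S_{i−1}). Then: (i) I_n ≥ 0 for every n ≤ N; and (ii) if |S_n − S_0| ≥ δ for some n ≤ N, then I_N ≥ δ²/ε. (This is the finitary low-volatility theorem: it witnesses that the upper game-theoretic probability of the event max_{n≤N} |S_n − S_0| ≥ δ is at most ε/δ² when the total quadratic variation of the price path is at most ε.) -/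
/-! Telescoping `2 a (b - a) = b² - a² - (b - a)²` gives
`Σ_{i<m} 2 (S_i - S_0)(S_{i+1} - S_i) = (S_m - S_0)² - Σ_{i<m} (S_{i+1} - S_i)²`.
For `m ≤ N` the subtracted quadratic variation is at most `ε`, so the capital stopped at time `m`
is at least `(S_m - S_0)² / ε`. This is nonnegative, and at the hitting time it is at least
`δ² / ε`. -/

open Classical in
/-- The first time `n ≤ N` at which `|g n| ≥ δ`; equal to `N` if there is no such time. -/
noncomputable def hitTime (g : ℕ → ℝ) (δ : ℝ) (N : ℕ) : ℕ :=
  if h : ∃ n, n ≤ N ∧ δ ≤ |g n| then Nat.find h else N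

/-- The capital process of the speculator starting from capital 1 who bets
`M_i = (2/ε) * (S_{i-1} - S_0)` for `i ≤ τ` and `M_i = 0` for `i > τ`, where `τ` is the
first time `n ≤ N` at which `|S_n - S_0| ≥ δ` (and `τ = N` if there is none). -/
noncomputable def capLow (S : ℕ → ℝ) (ε δ : ℝ) (N n : ℕ) : ℝ :=
  1 + (1 / ε) *
      ∑ i ∈ Finset.range (min n (hitTime (fun k => S k - S 0) δ N)),
        2 * (S i - S 0) * (S (i + 1) - S i)

theorem sum_bets_eq (S : ℕ → ℝ) (m : ℕ) :
    ∑ i ∈ Finset.range m, 2 * (S i - S 0) * (S (i + 1) - S i) =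
      (S m - S 0) ^ 2 - ∑ i ∈ Finset.range m, (S (i + 1) - S i) ^ 2 := by
  induction m with
  | zero => simp
  | succ k ih =>
    rw [Finset.sum_range_succ, Finset.sum_range_succ, ih]
    ring

theorem sq_div_le_capLow (N : ℕ) (ε δ : ℝ) (hε : 0 < ε) (S : ℕ → ℝ)
    (hQV : ∑ i ∈ Finset.range N, (S (i + 1) - S i) ^ 2 ≤ ε) (n : ℕ) (hn : n ≤ N) :
    (S (min n (hitTime (fun k => S k - S 0) δ N)) - S 0) ^ 2 / ε ≤ capLow S ε δ N n := by
  unfold capLow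
  rw [sum_bets_eq]
  set m := min n (hitTime (fun k => S k - S 0) δ N) with hm
  have hmN : m ≤ N := (min_le_left _ _).trans hn
  have hQ : ∑ i ∈ Finset.range m, (S (i + 1) - S i) ^ 2 ≤ ε :=
    (Finset.sum_le_sum_of_subset_of_nonneg (Finset.range_mono hmN)
      (fun _ _ _ => sq_nonneg _)).trans hQV
  rw [div_le_iff₀ hε]
  have h : (1 + 1 / ε * ((S m - S 0) ^ 2 - ∑ i ∈ Finset.range m, (S (i + 1) - S i) ^ 2)) * ε =
      ε + ((S m - S 0) ^ 2 - ∑ i ∈ Finset.range m, (S (i + 1) - S i) ^ 2) := by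
    field_simp
  linarith

theorem hitTime_spec (g : ℕ → ℝ) (δ : ℝ) (N : ℕ) (h : ∃ n, n ≤ N ∧ δ ≤ |g n|) :
    hitTime g δ N ≤ N ∧ δ ≤ |g (hitTime g δ N)| := by
  classical
  unfold hitTime
  rw [dif_pos h]
  exact Nat.find_spec h

/-- Finitary low-volatility theorem: if the total quadratic variation of the price path
is at most `ε`, then the stopped strategy above never goes bankrupt, and if the price
moves by at least `δ` from its starting value at some time `n ≤ N`, the final capital
is at least `δ² / ε`. -/
theorem low_volatility_finitary (N : ℕ) (ε δ : ℝ) (hε : 0 < ε) (hδ : 0 < δ)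
    (S : ℕ → ℝ)
    (hQV : ∑ i ∈ Finset.range N, (S (i + 1) - S i) ^ 2 ≤ ε) :
    (∀ n ≤ N, 0 ≤ capLow S ε δ N n) ∧
      ((∃ n ≤ N, δ ≤ |S n - S 0|) → δ ^ 2 / ε ≤ capLow S ε δ N N) := by
  refine ⟨fun n hn => ?_, fun h => ?_⟩
  · exact le_trans (by positivity) (sq_div_le_capLow N ε δ hε S hQV n hn)
  · obtain ⟨hle, hhit⟩ := hitTime_spec (fun k => S k - S 0) δ N h
    have hcap := sq_div_le_capLow N ε δ hε S hQV N le_rfl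
    rw [min_eq_right hle] at hcap
    refine le_trans ?_ hcap
    rw [← sq_abs (S _ - S 0)]
    gcongr
end

section
/- Let N ∈ ℕ, let ε > 0 and D > 0 be real numbers, and let S : ℕ → ℝ satisfy |S_n − S_0| ≤ D for every n ≤ N. Define the capital process I_n := 1 − (2/D²)·Σ_{i=1}^{n} (S_{i−1} − S_0)·(S_i − S_{i−1}). Then: (i) I_n ≥ 0 for every n ≤ N; and (ii) if Σ_{i=1}^{N} (S_i − S_{i−1})² ≥ D²/ε, then I_N ≥ 1/ε. (This is the finitary high-volatility theorem: it witnesses that the upper game-theoretic probability of the event Σ_{i=1}^{N} (S_i − S_{i−1})² ≥ D²/ε is at most ε when the price path stays within D of its starting value.) -/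
/-!
Summation by parts gives `2 ∑ (S_{i-1} - S_0)(S_i - S_{i-1}) = (S_n - S_0)² - ∑ (S_i - S_{i-1})²`,
so `I_n = 1 - (S_n - S_0)²/D² + (∑ (S_i - S_{i-1})²)/D²`. Since `|S_n - S_0| ≤ D`, the capital
`I_n` dominates the quadratic variation divided by `D²`, which yields both claims.
-/

/-- Discrete Itô formula for the square of the displacement from the starting price. -/
lemma two_mul_sum_displacement_mul_increment (S : ℕ → ℝ) (n : ℕ) :
    2 * ∑ i ∈ Finset.range n, (S i - S 0) * (S (i + 1) - S i) =
      (S n - S 0) ^ 2 - ∑ i ∈ Finset.range n, (S (i + 1) - S i) ^ 2 := by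
  induction n with
  | zero => simp
  | succ n ih =>
    rw [Finset.sum_range_succ, Finset.sum_range_succ, mul_add, ih]
    ring

/-- Finitary high-volatility theorem: if the price path stays within `D` of its starting
value up to time `N`, then the capital process
`I_n = 1 - (2/D²) ∑_{i=1}^n (S_{i-1} - S_0)(S_i - S_{i-1})` of the strategy betting
`M_i = -(2/D²)(S_{i-1} - S_0)` is nonnegative for all `n ≤ N`, and if the total quadratic
variation is at least `D²/ε`, the final capital is at least `1/ε`. -/
theorem high_volatility_finitary (N : ℕ) (ε D : ℝ) (hε : 0 < ε) (hD : 0 < D)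
    (S : ℕ → ℝ) (hbound : ∀ n ≤ N, |S n - S 0| ≤ D) :
    (∀ n ≤ N,
        0 ≤ 1 - (2 / D ^ 2) *
            ∑ i ∈ Finset.range n, (S i - S 0) * (S (i + 1) - S i)) ∧
      (D ^ 2 / ε ≤ ∑ i ∈ Finset.range N, (S (i + 1) - S i) ^ 2 →
        1 / ε ≤ 1 - (2 / D ^ 2) *
            ∑ i ∈ Finset.range N, (S i - S 0) * (S (i + 1) - S i)) := by
  have key : ∀ n ≤ N, (∑ i ∈ Finset.range n, (S (i + 1) - S i) ^ 2) / D ^ 2 ≤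
      1 - (2 / D ^ 2) * ∑ i ∈ Finset.range n, (S i - S 0) * (S (i + 1) - S i) := by
    intro n hn
    have hsq : (S n - S 0) ^ 2 ≤ D ^ 2 := sq_le_sq' (abs_le.mp (hbound n hn)).1
      (abs_le.mp (hbound n hn)).2
    have hD2 : 0 < D ^ 2 := by positivity
    rw [div_mul_eq_mul_div, two_mul_sum_displacement_mul_increment, le_sub_iff_add_le,
      ← add_div, div_le_one hD2]
    linarith
  refine ⟨fun n hn => le_trans ?_ (key n hn), fun h => le_trans ?_ (key N le_rfl)⟩
  · positivity
  · rw [le_div_iff₀ (by positivity), one_div_mul_eq_div]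
    exact h
end

section
/- Let S : ℕ → ℝ satisfy S_n > 0 for all n, let C ∈ ℝ, and set L_n := log(S_n/S_0). Then for every n ∈ ℕ: 1 + Σ_{i=1}^{n} 2·C·(L_{i−1}/S_{i−1})·(S_i − S_{i−1}) = 1 + C·L_n² + C·Σ_{i=1}^{n} L_{i−1}·β((S_i − S_{i−1})/S_{i−1}) − C·Σ_{i=1}^{n} (log(S_i/S_{i−1}))². (This is the relative-protocol capital identity (eq. change2a) for the strategy holding 2·C·L_{i−1}/S_{i−1} units of the security at step i.) -/
/-- The function `β(x) := 2 (x - log (1 + x))`; for small `|x|` it behaves as `x²`. -/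
noncomputable def beta (x : ℝ) : ℝ := 2 * (x - Real.log (1 + x))

/-- The relative-protocol capital identity (eq. change2a): for a positive price path `S`,
with `L_n := log (S_n / S_0)`, the capital of the speculator who starts with 1 and bets
`M_i := 2 C L_{i-1} / S_{i-1}` at step `i` satisfies
`1 + ∑_{i=1}^n 2 C (L_{i-1}/S_{i-1}) (S_i - S_{i-1})
  = 1 + C L_n² + C ∑_{i=1}^n L_{i-1} β((S_i - S_{i-1})/S_{i-1})
      - C ∑_{i=1}^n (log (S_i/S_{i-1}))²`. -/
theorem relative_capital_identity (S : ℕ → ℝ) (hS : ∀ n, 0 < S n) (C : ℝ) (n : ℕ) :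
    1 + ∑ i ∈ Finset.range n,
        2 * C * (Real.log (S i / S 0) / S i) * (S (i + 1) - S i) =
      1 + C * (Real.log (S n / S 0)) ^ 2
        + C * ∑ i ∈ Finset.range n,
            Real.log (S i / S 0) * beta ((S (i + 1) - S i) / S i)
        - C * ∑ i ∈ Finset.range n, (Real.log (S (i + 1) / S i)) ^ 2 := by
  induction n with
  | zero => simp [(hS 0).ne']
  | succ n ih =>
    have h0 := (hS 0).ne'
    have hn := (hS n).ne'
    have hn1 := (hS (n + 1)).ne'
    -- The log-price increment `l = log (S (n + 1) / S n)` and the return `r` satisfy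
    -- `l = log (1 + r)`, and `(L + l)² - L² - l² = 2 L l` cancels the log term of `L * β r`.
    have hL : Real.log (S (n + 1) / S 0)
        = Real.log (S n / S 0) + Real.log (S (n + 1) / S n) := by
      rw [Real.log_div hn1 h0, Real.log_div hn h0, Real.log_div hn1 hn]
      ring
    have hr : 1 + (S (n + 1) - S n) / S n = S (n + 1) / S n := by
      field_simp
      ring
    simp only [Finset.sum_range_succ, beta, hr, hL] at ih ⊢
    linear_combination ih
end

section
/- Let N ∈ ℕ, let ε > 0, γ > 0 and C > 0 be real numbers, let S : ℕ → ℝ satisfy S_n > 0 for all n, and set L_n := log(S_n/S_0). Assume: Σ_{i=1}^{N} (log(S_i/S_{i−1}))² ≤ ε, Σ_{i=1}^{N} β((S_i − S_{i−1})/S_{i−1}) ≤ ε, and L_n ≥ −γ for every n ≤ N. Then for every n ≤ N: 1 + Σ_{i=1}^{n} 2·C·(L_{i−1}/S_{i−1})·(S_i − S_{i−1}) ≥ 1 + C·L_n² − C·(1+γ)·ε. (This is the capital lower bound (eq. change2b) in the relative protocol.) -/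
/-- For `x > -1` the function `β` is nonnegative, since `log (1 + x) ≤ x`. -/
lemma beta_nonneg_of_gt {x : ℝ} (hx : -1 < x) : 0 ≤ beta x := by
  have h := Real.log_le_sub_one_of_pos (show 0 < 1 + x by linarith)
  unfold beta
  linarith

/-- The exact one-step gain, in units of `C`: with `l = log (b / a)` and `x = (b - a) / a`,
one has `2 L x = 2 L l + L β(x)` and `2 L l = (L + l)² - L² - l²`. -/
lemma step_gain_eq {a b : ℝ} (ha : 0 < a) (L : ℝ) :
    2 * (L / a) * (b - a) =
      (L + Real.log (b / a)) ^ 2 - L ^ 2 - Real.log (b / a) ^ 2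
        + L * beta ((b - a) / a) := by
  have h : 1 + (b - a) / a = b / a := by
    field_simp
    ring
  unfold beta
  rw [h]
  field_simp
  ring

/-- The capital lower bound (eq. change2b) in the relative protocol: if the positive
price path `S` satisfies `∑_{i=1}^N (log (S_i/S_{i-1}))² ≤ ε`,
`∑_{i=1}^N β((S_i - S_{i-1})/S_{i-1}) ≤ ε`, and `L_n := log (S_n/S_0) ≥ -γ` for all
`n ≤ N`, then the capital of the speculator who starts with 1 and bets
`M_i := 2 C L_{i-1} / S_{i-1}` at step `i` is at least `1 + C L_n² - C (1 + γ) ε` at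
every step `n ≤ N`. -/
theorem relative_capital_lower_bound (N : ℕ) (ε γ C : ℝ)
    (hε : 0 < ε) (hγ : 0 < γ) (hC : 0 < C)
    (S : ℕ → ℝ) (hS : ∀ n, 0 < S n)
    (hlog : ∑ i ∈ Finset.range N, (Real.log (S (i + 1) / S i)) ^ 2 ≤ ε)
    (hbeta : ∑ i ∈ Finset.range N, beta ((S (i + 1) - S i) / S i) ≤ ε)
    (hmin : ∀ n ≤ N, -γ ≤ Real.log (S n / S 0)) :
    ∀ n ≤ N,
      1 + C * (Real.log (S n / S 0)) ^ 2 - C * (1 + γ) * ε ≤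
        1 + ∑ i ∈ Finset.range n,
            2 * C * (Real.log (S i / S 0) / S i) * (S (i + 1) - S i) := by
  intro n hn
  have hb : ∀ i, 0 ≤ beta ((S (i + 1) - S i) / S i) := fun i => by
    apply beta_nonneg_of_gt
    rw [lt_div_iff₀ (hS i)]
    linarith [hS (i + 1)]
  have key : ∀ m ≤ N,
      C * (Real.log (S m / S 0)) ^ 2
          - C * ∑ i ∈ Finset.range m, (Real.log (S (i + 1) / S i)) ^ 2
          - C * γ * ∑ i ∈ Finset.range m, beta ((S (i + 1) - S i) / S i) ≤
        ∑ i ∈ Finset.range m, 2 * C * (Real.log (S i / S 0) / S i) * (S (i + 1) - S i) := by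
    intro m
    induction m with
    | zero => intro _; simp [(hS 0).ne']
    | succ k ih =>
      intro hk
      have ih' := ih (by omega)
      simp only [Finset.sum_range_succ]
      have hL : Real.log (S (k + 1) / S 0)
          = Real.log (S k / S 0) + Real.log (S (k + 1) / S k) := by
        rw [Real.log_div (hS _).ne' (hS _).ne', Real.log_div (hS _).ne' (hS _).ne',
          Real.log_div (hS _).ne' (hS _).ne']
        ring
      have hstep := congrArg (C * ·) (step_gain_eq (b := S (k + 1)) (hS k) (Real.log (S k / S 0)))
      have hpos : 0 ≤ C * ((Real.log (S k / S 0) + γ) * beta ((S (k + 1) - S k) / S k)) :=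
        mul_nonneg hC.le (mul_nonneg (by linarith [hmin k (by omega)]) (hb k))
      rw [← hL] at hstep
      linarith
  have h1 : ∑ i ∈ Finset.range n, (Real.log (S (i + 1) / S i)) ^ 2 ≤ ε :=
    (Finset.sum_le_sum_of_subset_of_nonneg (Finset.range_mono hn)
      fun _ _ _ => sq_nonneg _).trans hlog
  have h2 : ∑ i ∈ Finset.range n, beta ((S (i + 1) - S i) / S i) ≤ ε :=
    (Finset.sum_le_sum_of_subset_of_nonneg (Finset.range_mono hn)
      fun i _ _ => hb i).trans hbeta
  have h3 := mul_le_mul_of_nonneg_left h1 hC.le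
  have h4 := mul_le_mul_of_nonneg_left h2 (mul_pos hC hγ).le
  linarith [key n hn]
end

section
/- Let N ∈ ℕ, let ε > 0, δ > 0 and γ > 0 be real numbers, let S : ℕ → ℝ satisfy S_n > 0 for all n, and set L_n := log(S_n/S_0) and C := 1/((1+γ)·ε). Assume: Σ_{i=1}^{N} (log(S_i/S_{i−1}))² ≤ ε, Σ_{i=1}^{N} β((S_i − S_{i−1})/S_{i−1}) ≤ ε, and L_n ≥ −γ for every n ≤ N. Let τ be the least n ≤ N such that |L_n| ≥ δ, and τ := N if no such n exists. Define the capital process I_n := 1 + Σ_{i=1}^{min(n,τ)} 2·C·(L_{i−1}/S_{i−1})·(S_i − S_{i−1}). Then: (i) I_n ≥ 0 for every n ≤ N; and (ii) if |L_n| ≥ δ for some n ≤ N, then I_N ≥ δ²/((1+γ)·ε). (This is the finitary relative low-volatility theorem: it witnesses that the upper game-theoretic probability of the event max_{n≤N} |log(S_n/S_0)| ≥ δ is at most (1+γ)·ε/δ².) -/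
/-- The capital process of the speculator starting from 1 who, with
`L_n := log (S_n / S_0)` and `C := 1/((1+γ) ε)`, bets `M_i := 2 C L_{i-1}/S_{i-1}` for
`i ≤ τ` and `M_i := 0` for `i > τ`, where `τ` is the first time `n ≤ N` with
`|L_n| ≥ δ` (and `τ = N` if there is none). -/
noncomputable def capRel (S : ℕ → ℝ) (ε γ δ : ℝ) (N n : ℕ) : ℝ :=
  1 + ∑ i ∈ Finset.range
        (min n (hitTime (fun k => Real.log (S k / S 0)) δ N)),
      2 * (1 / ((1 + γ) * ε)) * (Real.log (S i / S 0) / S i) * (S (i + 1) - S i)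

lemma beta_ratio {a b : ℝ} (ha : 0 < a) :
    beta ((b - a) / a) = 2 * ((b - a) / a - Real.log (b / a)) := by
  have h : 1 + (b - a) / a = b / a := by field_simp; ring
  rw [beta, h]

lemma beta_ratio_nonneg {a b : ℝ} (ha : 0 < a) (hb : 0 < b) :
    0 ≤ beta ((b - a) / a) := by
  have h := Real.log_le_sub_one_of_pos (div_pos hb ha)
  have h' : (b - a) / a = b / a - 1 := by field_simp
  rw [beta_ratio ha]
  linarith

/-- Summed form of the one-step identity
`2 L x = (L' ^ 2 - L ^ 2) - l ^ 2 + L β(x)`, with `L β(x)` bounded below by `-γ β(x)`. -/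
lemma sum_bets_ge (N : ℕ) (γ : ℝ) (S : ℕ → ℝ) (hS : ∀ n, 0 < S n)
    (hmin : ∀ n ≤ N, -γ ≤ Real.log (S n / S 0)) (m : ℕ) (hm : m ≤ N) :
    Real.log (S m / S 0) ^ 2
        - ∑ i ∈ Finset.range m, (Real.log (S (i + 1) / S i)) ^ 2
        - γ * ∑ i ∈ Finset.range m, beta ((S (i + 1) - S i) / S i)
      ≤ ∑ i ∈ Finset.range m, 2 * Real.log (S i / S 0) * ((S (i + 1) - S i) / S i) := by
  induction m with
  | zero => simp [(hS 0).ne']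
  | succ k ih =>
    have ih := ih (by omega)
    rw [Finset.sum_range_succ, Finset.sum_range_succ, Finset.sum_range_succ]
    have hb := beta_ratio_nonneg (hS k) (hS (k + 1))
    have hL := hmin k (by omega)
    have hadd : Real.log (S (k + 1) / S 0)
        = Real.log (S k / S 0) + Real.log (S (k + 1) / S k) := by
      rw [Real.log_div (hS _).ne' (hS _).ne', Real.log_div (hS _).ne' (hS _).ne',
        Real.log_div (hS _).ne' (hS _).ne']
      ring
    have hx : (S (k + 1) - S k) / S k
        = Real.log (S (k + 1) / S k) + beta ((S (k + 1) - S k) / S k) / 2 := by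
      rw [beta_ratio (hS k)]; ring
    have hprod := mul_nonneg (by linarith : 0 ≤ Real.log (S k / S 0) + γ) hb
    have hstep : 2 * Real.log (S k / S 0) * ((S (k + 1) - S k) / S k)
        = 2 * Real.log (S k / S 0) * Real.log (S (k + 1) / S k)
          + Real.log (S k / S 0) * beta ((S (k + 1) - S k) / S k) := by
      linear_combination (2 * Real.log (S k / S 0)) * hx
    rw [hadd, hstep]
    nlinarith

lemma capital_ge (N : ℕ) (ε γ : ℝ) (hε : 0 < ε) (hγ : 0 < γ)
    (S : ℕ → ℝ) (hS : ∀ n, 0 < S n)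
    (hlog : ∑ i ∈ Finset.range N, (Real.log (S (i + 1) / S i)) ^ 2 ≤ ε)
    (hbeta : ∑ i ∈ Finset.range N, beta ((S (i + 1) - S i) / S i) ≤ ε)
    (hmin : ∀ n ≤ N, -γ ≤ Real.log (S n / S 0)) (m : ℕ) (hm : m ≤ N) :
    Real.log (S m / S 0) ^ 2 / ((1 + γ) * ε) ≤ 1 + ∑ i ∈ Finset.range m,
      2 * (1 / ((1 + γ) * ε)) * (Real.log (S i / S 0) / S i) * (S (i + 1) - S i) := by
  have key := sum_bets_ge N γ S hS hmin m hm
  have hsub : Finset.range m ⊆ Finset.range N := Finset.range_subset_range.2 hm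
  -- both volatility sums have nonnegative terms, so the bounds up to `N` hold up to `m`
  have h1 := (Finset.sum_le_sum_of_subset_of_nonneg hsub
    (fun i _ _ => sq_nonneg (Real.log (S (i + 1) / S i)))).trans hlog
  have h2 := (Finset.sum_le_sum_of_subset_of_nonneg hsub
    (fun i _ _ => beta_ratio_nonneg (hS i) (hS (i + 1)))).trans hbeta
  have h3 := mul_le_mul_of_nonneg_left h2 hγ.le
  have hD : 0 < (1 + γ) * ε := by positivity
  have heq : ∑ i ∈ Finset.range m,
      2 * (1 / ((1 + γ) * ε)) * (Real.log (S i / S 0) / S i) * (S (i + 1) - S i)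
      = (∑ i ∈ Finset.range m, 2 * Real.log (S i / S 0) * ((S (i + 1) - S i) / S i))
        / ((1 + γ) * ε) := by
    rw [Finset.sum_div]
    exact Finset.sum_congr rfl fun i _ => by ring
  rw [heq, div_le_iff₀ hD, add_mul, div_mul_cancel₀ _ hD.ne']
  linarith

lemma hitTime_le (g : ℕ → ℝ) (δ : ℝ) (N : ℕ) : hitTime g δ N ≤ N := by
  classical
  unfold hitTime
  split_ifs with h
  · exact (Nat.find_spec h).1
  · exact le_rfl

lemma le_abs_hitTime (g : ℕ → ℝ) (δ : ℝ) (N : ℕ) (h : ∃ n, n ≤ N ∧ δ ≤ |g n|) :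
    δ ≤ |g (hitTime g δ N)| := by
  classical
  unfold hitTime
  rw [dif_pos h]
  exact (Nat.find_spec h).2

/-- Finitary relative low-volatility theorem: under the stated volatility and drawdown
constraints on the positive price path `S`, the stopped strategy above never goes
bankrupt, and if `|log (S_n/S_0)| ≥ δ` for some `n ≤ N`, the final capital is at least
`δ²/((1+γ) ε)`. -/
theorem relative_low_volatility_finitary (N : ℕ) (ε δ γ : ℝ)
    (hε : 0 < ε) (hδ : 0 < δ) (hγ : 0 < γ)
    (S : ℕ → ℝ) (hS : ∀ n, 0 < S n)
    (hlog : ∑ i ∈ Finset.range N, (Real.log (S (i + 1) / S i)) ^ 2 ≤ ε)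
    (hbeta : ∑ i ∈ Finset.range N, beta ((S (i + 1) - S i) / S i) ≤ ε)
    (hmin : ∀ n ≤ N, -γ ≤ Real.log (S n / S 0)) :
    (∀ n ≤ N, 0 ≤ capRel S ε γ δ N n) ∧
      ((∃ n ≤ N, δ ≤ |Real.log (S n / S 0)|) →
        δ ^ 2 / ((1 + γ) * ε) ≤ capRel S ε γ δ N N) := by
  have hD : 0 < (1 + γ) * ε := by positivity
  have hcap := capital_ge N ε γ hε hγ S hS hlog hbeta hmin
  refine ⟨fun n hn => ?_, fun h => ?_⟩
  · exact (div_nonneg (sq_nonneg _) hD.le).trans (hcap _ ((min_le_left _ _).trans hn))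
  · have hτ := hitTime_le (fun k => Real.log (S k / S 0)) δ N
    have hit := le_abs_hitTime (fun k => Real.log (S k / S 0)) δ N h
    unfold capRel
    rw [min_eq_right hτ]
    refine le_trans ?_ (hcap _ hτ)
    have hsq := pow_le_pow_left₀ hδ.le hit 2
    rw [sq_abs] at hsq
    exact div_le_div_of_nonneg_right hsq hD.le
end

section
/- Let N ∈ ℕ, let ε > 0 and D > 0 be real numbers, let S, B : ℕ → ℝ with B_n > 0 for all n, and set S†_n := S_n/B_n. Assume |S†_n − S†_0| ≤ D for every n ≤ N. Set M_i := −(2/D²)·(S†_{i−1} − S†_0), and let I : ℕ → ℝ be defined by I_0 := B_0 and I_n := (I_{n−1} − M_n·S_{n−1})·(B_n/B_{n−1}) + M_n·S_n for n ≥ 1. Then: (i) I_n ≥ 0 for every n ≤ N; and (ii) if Σ_{i=1}^{N} (S†_i − S†_{i−1})² ≥ D²/ε, then I_N ≥ B_N/ε. (Finitary high-volatility theorem with non-zero interest rate, for the discounted price S/B.) -/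
/-! Put `x n = S† n - S† 0` and let `Q n` be the quadratic variation of `S†` up to time `n`.
In units of `B` the strategy gains `-(2 / D²) x n (x (n+1) - x n)` at each step, and
`-2 a (b - a) = (b - a)² - b² + a²`, so the gains telescope to the exact formula
`I n / B n = 1 + (Q n - (x n)²) / D²`. Since `(x n)² ≤ D²`, this gives `I n / B n ≥ Q n / D²`,
which yields both claims. -/

/-- The price of the security `S` measured in units of the numéraire `B`. -/
noncomputable def Sdag (S B : ℕ → ℝ) (n : ℕ) : ℝ := S n / B n

/-- The capital in closed form, multiplied through by `D²`. -/
lemma capital_closed_form (D : ℝ) (hD : 0 < D) (S B : ℕ → ℝ) (hB : ∀ n, 0 < B n)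
    (M I : ℕ → ℝ)
    (hM : ∀ i, M i = -(2 / D ^ 2) * (Sdag S B (i - 1) - Sdag S B 0))
    (hI0 : I 0 = B 0)
    (hrec : ∀ n, I (n + 1) =
      (I n - M (n + 1) * S n) * (B (n + 1) / B n) + M (n + 1) * S (n + 1)) (n : ℕ) :
    D ^ 2 * I n = B n * (D ^ 2 + ∑ i ∈ Finset.range n, (Sdag S B (i + 1) - Sdag S B i) ^ 2
      - (Sdag S B n - Sdag S B 0) ^ 2) := by
  have hS : ∀ k, S k = Sdag S B k * B k := fun k => by
    rw [Sdag, div_mul_cancel₀ _ (hB k).ne']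
  induction n with
  | zero => simp [hI0, mul_comm]
  | succ n ih =>
    have hDM : D ^ 2 * M (n + 1) = -2 * (Sdag S B n - Sdag S B 0) := by
      rw [hM, Nat.add_sub_cancel]
      field_simp
    have hratio : B n * (B (n + 1) / B n) = B (n + 1) := mul_div_cancel₀ _ (hB n).ne'
    rw [hrec, Finset.sum_range_succ, hS n, hS (n + 1)]
    generalize B (n + 1) / B n = r at hratio
    rw [← hratio]
    linear_combination r * ih + (r * B n * (Sdag S B (n + 1) - Sdag S B n)) * hDM

/-- Finitary high-volatility theorem with non-zero interest rate: if the discounted price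
`S† = S/B` stays within `D` of its starting value up to time `N`, then the capital
process starting from one unit of `B` of the strategy betting
`M_i = -(2/D²)(S†_{i-1} - S†_0)` stays nonnegative, and if the quadratic variation of
`S†` is at least `D²/ε`, the final capital is at least `B_N / ε`. -/
theorem high_volatility_numeraire (N : ℕ) (ε D : ℝ) (hε : 0 < ε) (hD : 0 < D)
    (S B : ℕ → ℝ) (hB : ∀ n, 0 < B n)
    (hbound : ∀ n ≤ N, |Sdag S B n - Sdag S B 0| ≤ D)
    (M I : ℕ → ℝ)
    (hM : ∀ i, M i = -(2 / D ^ 2) * (Sdag S B (i - 1) - Sdag S B 0))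
    (hI0 : I 0 = B 0)
    (hrec : ∀ n, I (n + 1) =
      (I n - M (n + 1) * S n) * (B (n + 1) / B n) + M (n + 1) * S (n + 1)) :
    (∀ n ≤ N, 0 ≤ I n) ∧
      (D ^ 2 / ε ≤ ∑ i ∈ Finset.range N, (Sdag S B (i + 1) - Sdag S B i) ^ 2 →
        B N / ε ≤ I N) := by
  have key : ∀ n ≤ N,
      B n * ∑ i ∈ Finset.range n, (Sdag S B (i + 1) - Sdag S B i) ^ 2 ≤ D ^ 2 * I n := by
    intro n hn
    rw [capital_closed_form D hD S B hB M I hM hI0 hrec n]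
    have hsq : (Sdag S B n - Sdag S B 0) ^ 2 ≤ D ^ 2 :=
      sq_le_sq' (abs_le.mp (hbound n hn)).1 (abs_le.mp (hbound n hn)).2
    exact mul_le_mul_of_nonneg_left (by linarith) (hB n).le
  have hD2 : 0 < D ^ 2 := pow_pos hD 2
  refine ⟨fun n hn => ?_, fun hQ => ?_⟩
  · have hpos : 0 ≤ B n * ∑ i ∈ Finset.range n, (Sdag S B (i + 1) - Sdag S B i) ^ 2 :=
      mul_nonneg (hB n).le (Finset.sum_nonneg fun i _ => sq_nonneg _)
    exact nonneg_of_mul_nonneg_right (hpos.trans (key n hn)) hD2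
  · refine le_of_mul_le_mul_left ?_ hD2
    calc D ^ 2 * (B N / ε) = B N * (D ^ 2 / ε) := by ring
      _ ≤ _ := mul_le_mul_of_nonneg_left hQ (hB N).le
      _ ≤ D ^ 2 * I N := key N le_rfl
end
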